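/- For all n ≥ 1 and 0 ≤ k ≤ n-1, the complement of the generalized crown graph S_{n-k}^k can be represented by a 3-uniform word, i.e., there is a word over its vertex set in which every vertex occurs exactly three times that represents the graph. -/

import Mathlib

/-- Two distinct letters `x` and `y` alternate in the word `w` if, after deleting all
letters other than `x` and `y`, no two consecutive letters of the remaining word are equal. -/
def Alternate {V : Type*} [DecidableEq V] (w : List V) (x y : V) : Prop :=
  (w.filter fun z => decide (z = x ∨ z = y)).Chain' (· ≠ ·)

/-- A word `w` represents the simple graph `G` if every vertex occurs in `w` at least once
and two distinct vertices alternate in `w` exactly when they are adjacent in `G`. -/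
def Represents {V : Type*} [DecidableEq V] (G : SimpleGraph V) (w : List V) : Prop :=
  (∀ v : V, v ∈ w) ∧ ∀ x y : V, x ≠ y → (Alternate w x y ↔ G.Adj x y)

/-- The generalized crown graph `S_{n-k}^k`: a bipartite graph on vertex set
`{x_1, …, x_n} ∪ {y_1, …, y_n}` (encoded as `Fin n ⊕ Fin n`) in which `x i` and `y j` are
adjacent iff `j` is not congruent to any of `i, i+1, …, i+k` modulo `n`. -/
def genCrownGraph (n k : ℕ) : SimpleGraph (Fin n ⊕ Fin n) :=
  SimpleGraph.fromRel fun u v =>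
    match u, v with
    | Sum.inl i, Sum.inr j => ∀ l : ℕ, l ≤ k → ¬ ((j : ℕ) ≡ (i : ℕ) + l [MOD n])
    | _, _ => False

/-!
In any shuffle of `(x₀ ⋯ xₙ₋₁)³` and `(y₀ ⋯ yₙ₋₁)³`, two letters of the same side alternate. Choose
the shuffle in which the `x`-letters of the first two rounds run `n - k - 1` places ahead of the
`y`-letters, while those of the last round are level with them. The pattern `xᵢ yⱼ xᵢ yⱼ xᵢ yⱼ` then
arises exactly when `i ≤ j ≤ i + k`: the upper bound puts the first `yⱼ` before the second `xᵢ`, and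
the lower bound puts the third `xᵢ` before the third `yⱼ`. The opposite pattern arises exactly when
`j + n ≤ i + k`, which puts the first `yⱼ` before the first `xᵢ`. Together these cases say that `j`
is congruent to one of `i, …, i + k` modulo `n`.
-/

variable {V ι α : Type*}

section Interleaving

variable [LinearOrder α] {m : ℕ} {a b : Fin m → α}

/-- The sequences `a` and `b` interleave, `a` first: `a 0 < b 0 < a 1 < b 1 < ⋯`. -/
def Interleaves (a b : Fin m → α) : Prop :=
  ∀ t, a t < b t ∧ ∀ s < t, b s < a t

/-- Between any two terms of `a` there is a term of `b`. -/
def Separates (b a : Fin m → α) : Prop :=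
  ∀ s t, a s < a t → ∃ r, a s < b r ∧ b r < a t

theorem interleaves_fin_three {a b : Fin 3 → α} :
    Interleaves a b ↔ a 0 < b 0 ∧ b 0 < a 1 ∧ a 1 < b 1 ∧ b 1 < a 2 ∧ a 2 < b 2 := by
  constructor
  · intro h
    exact ⟨(h 0).1, (h 1).2 0 (by decide), (h 1).1, (h 2).2 1 (by decide), (h 2).1⟩
  · rintro ⟨h00, h01, h11, h12, h22⟩
    simp [Interleaves, Fin.forall_fin_succ, *, h01.trans (h11.trans h12)]

theorem Interleaves.separates_left (h : Interleaves a b) (ha : StrictMono a) : Separates b a :=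
  fun s t hst => ⟨s, (h s).1, (h t).2 s (ha.lt_iff_lt.1 hst)⟩

theorem Interleaves.separates_right (h : Interleaves a b) (hb : StrictMono b) : Separates a b :=
  fun s t hst => ⟨t, (h t).2 s (hb.lt_iff_lt.1 hst), (h t).1⟩

theorem interleaves_of_separates {a b : Fin (m + 1) → α} (ha : StrictMono a) (hb : StrictMono b)
    (hba : Separates b a) (hab : Separates a b) (h0 : a 0 < b 0) : Interleaves a b := by
  refine Fin.induction ⟨h0, fun s hs => absurd hs (Fin.not_lt_zero s)⟩ fun t ⟨iht, ihs⟩ => ?_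
  have hba_next : b t.castSucc < a t.succ := by
    obtain ⟨r, har, hra⟩ := hba _ _ (ha t.castSucc_lt_succ)
    have htr : t.castSucc ≤ r := not_lt.1 fun hr => (ihs r hr).not_gt har
    exact (hb.monotone htr).trans_lt hra
  refine ⟨?_, fun s hs => (hb.monotone (Fin.le_castSucc_iff.2 hs)).trans_lt hba_next⟩
  obtain ⟨r, hbr, hrb⟩ := hab _ _ (hb t.castSucc_lt_succ)
  have htr : t.castSucc < r := ha.lt_iff_lt.1 (iht.trans hbr)
  exact (ha.monotone (Fin.castSucc_lt_iff_succ_le.1 htr)).trans_lt hrb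

theorem separates_and_separates_iff (ha : StrictMono a) (hb : StrictMono b)
    (hne : ∀ s t, a s ≠ b t) :
    Separates b a ∧ Separates a b ↔ Interleaves a b ∨ Interleaves b a := by
  refine ⟨fun ⟨hba, hab⟩ => ?_, ?_⟩
  · obtain _ | m := m
    · exact .inl fun t => t.elim0
    · exact (hne 0 0).lt_or_gt.imp (interleaves_of_separates ha hb hba hab)
        (interleaves_of_separates hb ha hab hba)
  · rintro (h | h)
    · exact ⟨h.separates_left ha, h.separates_right hb⟩
    · exact ⟨h.separates_right ha, h.separates_left hb⟩

end Interleaving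

section Timetable

variable [LinearOrder α]

theorem isChain_ne_iff_exists_between {f : ι → V} {key : ι → α} {l : List ι}
    (hl : l.Pairwise (key · < key ·)) :
    l.IsChain (f · ≠ f ·) ↔ ∀ a ∈ l, ∀ b ∈ l, f a = f b → key a < key b →
      ∃ c ∈ l, f c ≠ f a ∧ key a < key c ∧ key c < key b := by
  have lt_iff {i j : ℕ} (hi : i < l.length) (hj : j < l.length) : key l[i] < key l[j] ↔ i < j := by
    have hmono : StrictMono fun i : Fin l.length => key l[i] :=
      fun i j hij => List.pairwise_iff_get.1 hl i j hij
    exact hmono.lt_iff_lt (a := ⟨i, hi⟩) (b := ⟨j, hj⟩)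
  rw [List.isChain_iff_getElem]
  constructor
  · intro h a ha b hb hab hlt
    obtain ⟨i, hi, rfl⟩ := List.getElem_of_mem ha
    obtain ⟨j, hj, rfl⟩ := List.getElem_of_mem hb
    have hij : i < j := (lt_iff hi hj).1 hlt
    have hsucc : f l[i] ≠ f l[i + 1] := h i (by omega)
    have hj_ne : i + 1 ≠ j := by
      rintro rfl
      exact hsucc hab
    exact ⟨l[i + 1], List.getElem_mem _, hsucc.symm, (lt_iff _ _).2 i.lt_succ_self,
      (lt_iff _ _).2 (by omega)⟩
  · intro h i hi heq
    obtain ⟨c, hc, -, hic, hci⟩ := h _ (List.getElem_mem (by omega)) _ (List.getElem_mem hi) heq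
      ((lt_iff _ _).2 i.lt_succ_self)
    obtain ⟨k, hk, rfl⟩ := List.getElem_of_mem hc
    rw [lt_iff] at hic hci
    omega

variable [Fintype V] {m : ℕ} {τ : V → Fin m → α}

/-- The pairs `(v, t)`, standing for the `t`-th occurrence of the letter `v`, in the order of their
times `τ v t`. -/
noncomputable def occurrences (τ : V → Fin m → α) : List (V × Fin m) :=
  (Finset.univ : Finset (V × Fin m)).toList.mergeSort fun p q => τ p.1 p.2 ≤ τ q.1 q.2

/-- The `m`-uniform word in which the `t`-th occurrence of each letter `v` happens at time
`τ v t`. -/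
noncomputable def wordOfTimes (τ : V → Fin m → α) : List V :=
  (occurrences τ).map Prod.fst

theorem occurrences_perm (τ : V → Fin m → α) :
    (occurrences τ).Perm (Finset.univ : Finset (V × Fin m)).toList :=
  List.mergeSort_perm _ _

theorem mem_occurrences (p : V × Fin m) : p ∈ occurrences τ := by
  simp [(occurrences_perm τ).mem_iff]

theorem nodup_occurrences (τ : V → Fin m → α) : (occurrences τ).Nodup :=
  (occurrences_perm τ).nodup_iff.2 (Finset.nodup_toList _)

theorem pairwise_occurrences (hτ : Function.Injective2 τ) :
    (occurrences τ).Pairwise fun p q => τ p.1 p.2 < τ q.1 q.2 := by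
  have hle : (occurrences τ).Pairwise fun p q => τ p.1 p.2 ≤ τ q.1 q.2 := by
    simpa [occurrences] using List.pairwise_mergeSort (l := Finset.univ.toList)
      (le := fun p q : V × Fin m => decide (τ p.1 p.2 ≤ τ q.1 q.2))
      (fun p q r => by simpa using le_trans) (fun p q => by simpa using le_total _ _)
  exact hle.imp₂ (fun p q hpq hne => hpq.lt_of_ne fun h => hne (Prod.ext_iff.2 (hτ h)))
    (nodup_occurrences τ)

theorem count_wordOfTimes [BEq V] [LawfulBEq V] (τ : V → Fin m → α) (v : V) :
    (wordOfTimes τ).count v = m := by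
  have hperm : ((occurrences τ).filter fun p => p.1 == v).Perm ((List.finRange m).map (v, ·)) := by
    refine (List.perm_ext_iff_of_nodup ((nodup_occurrences τ).filter _)
      ((List.nodup_finRange m).map (Prod.mk_right_injective v))).2 fun p => ?_
    simp only [List.mem_filter, mem_occurrences, true_and, beq_iff_eq, List.mem_map,
      List.mem_finRange, Prod.ext_iff]
    exact ⟨fun h => ⟨p.2, h.symm, rfl⟩, fun ⟨_, h, _⟩ => h.symm⟩
  rw [wordOfTimes, List.count, List.countP_map, List.countP_eq_length_filter]
  exact hperm.length_eq.trans (by simp)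

variable [DecidableEq V]

theorem alternate_wordOfTimes_iff_separates (hτ : Function.Injective2 τ) {x y : V} (hxy : x ≠ y) :
    Alternate (wordOfTimes τ) x y ↔ Separates (τ y) (τ x) ∧ Separates (τ x) (τ y) := by
  rw [Alternate, List.Chain', wordOfTimes, List.filter_map, List.isChain_map,
    isChain_ne_iff_exists_between ((pairwise_occurrences hτ).filter _)]
  simp only [List.mem_filter, mem_occurrences, true_and, Function.comp_apply,
    decide_eq_true_eq, Prod.forall, Prod.exists]
  constructor
  · intro h
    constructor
    · intro s t hst
      obtain ⟨u, r, rfl | rfl, hu, hr⟩ := h x s (.inl rfl) x t (.inl rfl) rfl hst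
      · exact absurd rfl hu
      · exact ⟨r, hr⟩
    · intro s t hst
      obtain ⟨u, r, rfl | rfl, hu, hr⟩ := h y s (.inr rfl) y t (.inr rfl) rfl hst
      · exact ⟨r, hr⟩
      · exact absurd rfl hu
  · rintro ⟨hyx, hxy'⟩ u s (rfl | rfl) _ t - rfl hst
    · obtain ⟨r, hr⟩ := hyx s t hst
      exact ⟨y, r, .inr rfl, hxy.symm, hr⟩
    · obtain ⟨r, hr⟩ := hxy' s t hst
      exact ⟨x, r, .inl rfl, hxy, hr⟩

theorem alternate_wordOfTimes_iff_interleaves (hτ : Function.Injective2 τ)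
    (hmono : ∀ v, StrictMono (τ v)) {x y : V} (hxy : x ≠ y) :
    Alternate (wordOfTimes τ) x y ↔ Interleaves (τ x) (τ y) ∨ Interleaves (τ y) (τ x) := by
  rw [alternate_wordOfTimes_iff_separates hτ hxy, separates_and_separates_iff (hmono x) (hmono y)
    fun s t h => hxy (hτ h).1]

theorem represents_wordOfTimes {G : SimpleGraph V} [NeZero m] (hτ : Function.Injective2 τ)
    (hmono : ∀ v, StrictMono (τ v))
    (hG : ∀ x y, x ≠ y → (Interleaves (τ x) (τ y) ∨ Interleaves (τ y) (τ x) ↔ G.Adj x y)) :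
    Represents G (wordOfTimes τ) :=
  ⟨fun v => List.count_pos_iff.1 <| (count_wordOfTimes τ v).symm ▸ NeZero.pos m,
    fun x y hxy => (alternate_wordOfTimes_iff_interleaves hτ hmono hxy).trans (hG x y hxy)⟩

end Timetable

section Periodic

variable {f : ℕ → α} {n : ℕ}

/-- The times at which the `i`-th letter of `v₀ ⋯ vₙ₋₁` occurs in the power `(v₀ ⋯ vₙ₋₁)ᵐ`, when
the `p`-th position of that power happens at time `f p`. -/
def periodicTimes (m : ℕ) (f : ℕ → α) (i : Fin n) (t : Fin m) : α :=
  f (n * t + i)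

theorem periodicTimes_injective2 {m : ℕ} (hf : Function.Injective f) :
    Function.Injective2 (periodicTimes (n := n) m f) := by
  intro i j s t h
  have hpos : finProdFinEquiv (s, i) = finProdFinEquiv (t, j) :=
    Fin.ext (by simpa [add_comm] using hf h)
  simpa [and_comm] using hpos

variable [LinearOrder α]

theorem mul_add_lt_mul_add {s t : ℕ} (i j : Fin n) (hst : s < t) : n * s + i < n * t + j :=
  calc
    n * s + i < n * (s + 1) := by rw [mul_add_one]; gcongr; exact i.isLt
    _ ≤ n * t := by gcongr; exact hst
    _ ≤ n * t + j := Nat.le_add_right _ _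

theorem strictMono_periodicTimes {m : ℕ} (hf : StrictMono f) (i : Fin n) :
    StrictMono (periodicTimes m f i) :=
  fun _ _ hst => hf (mul_add_lt_mul_add i i hst)

theorem interleaves_periodicTimes {m : ℕ} (hf : StrictMono f) {i j : Fin n} (hij : i < j) :
    Interleaves (periodicTimes m f i) (periodicTimes m f j) :=
  fun _ => ⟨hf (Nat.add_lt_add_left hij _), fun _ hst => hf (mul_add_lt_mul_add j i hst)⟩

theorem interleaves_periodicTimes_or {m : ℕ} (hf : StrictMono f) {i j : Fin n} (hij : i ≠ j) :
    Interleaves (periodicTimes m f i) (periodicTimes m f j) ∨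
      Interleaves (periodicTimes m f j) (periodicTimes m f i) :=
  hij.lt_or_gt.imp (interleaves_periodicTimes hf) (interleaves_periodicTimes hf)

end Periodic

-- `List.count` over a sum type uses the derived `BEq` instance rather than decidable equality.
instance instLawfulBEqSum {β γ : Type*} [BEq β] [BEq γ] [LawfulBEq β] [LawfulBEq γ] :
    LawfulBEq (β ⊕ γ) where
  eq_of_beq {a b} h := by
    rcases a with a | a <;> rcases b with b | b
    · exact congrArg _ (eq_of_beq (α := β) h)
    · cases h
    · cases h
    · exact congrArg _ (eq_of_beq (α := γ) h)
  rfl {a} := by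
    rcases a with a | a
    · exact beq_self_eq_true (α := β) a
    · exact beq_self_eq_true (α := γ) a

section Crown

variable {n k : ℕ}

theorem exists_modEq_add_iff {i j : ℕ} (hi : i < n) (hj : j < n) :
    (∃ l ≤ k, j ≡ i + l [MOD n]) ↔ (i ≤ j ∧ j ≤ i + k) ∨ j + n ≤ i + k := by
  constructor
  · rintro ⟨l, hl, h⟩
    rw [Nat.ModEq, Nat.mod_eq_of_lt hj] at h
    have hdiv : n * ((i + l) / n) + j = i + l := h ▸ Nat.div_add_mod (i + l) n
    obtain hq | hq := Nat.eq_zero_or_pos ((i + l) / n)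
    · left
      simp only [hq, mul_zero] at hdiv
      omega
    · right
      have := Nat.le_mul_of_pos_right n hq
      omega
  · rintro (⟨hij, hjk⟩ | hjk)
    · exact ⟨j - i, by omega, by rw [Nat.add_sub_cancel' hij]⟩
    · refine ⟨j + n - i, by omega, ?_⟩
      rw [Nat.add_sub_cancel' (by omega)]
      simp [Nat.ModEq]

theorem compl_genCrownGraph_adj_inl_inr {i j : Fin n} :
    (genCrownGraph n k)ᶜ.Adj (.inl i) (.inr j) ↔ ∃ l ≤ k, (j : ℕ) ≡ i + l [MOD n] := by
  simp [genCrownGraph]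

theorem compl_genCrownGraph_adj_inl_inl {i j : Fin n} :
    (genCrownGraph n k)ᶜ.Adj (.inl i) (.inl j) ↔ i ≠ j := by
  simp [genCrownGraph]

theorem compl_genCrownGraph_adj_inr_inr {i j : Fin n} :
    (genCrownGraph n k)ᶜ.Adj (.inr i) (.inr j) ↔ i ≠ j := by
  simp [genCrownGraph]

/-- The time of the `p`-th letter of `(x₀ ⋯ xₙ₋₁)³` in its shuffle with `(y₀ ⋯ yₙ₋₁)³`. It comes
immediately before the `y`-letter number `p + k + 1 - n` if it lies in the first two rounds, and
immediately before the `y`-letter number `p` otherwise. Times are even for `x` and odd for `y`. -/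
def xTime (n k p : ℕ) : ℕ :=
  2 * if p < 2 * n then p + k + 1 else p + n

/-- The time of the `q`-th letter of `(y₀ ⋯ yₙ₋₁)³` in its shuffle with `(x₀ ⋯ xₙ₋₁)³`. The offset
`n` keeps `p + k + 1 - n` in `xTime` from being truncated. -/
def yTime (n q : ℕ) : ℕ :=
  2 * (q + n) + 1

/-- The times of the letters in the word representing the complement of `S_{n-k}^k`. -/
def crownTimes (n k : ℕ) : Fin n ⊕ Fin n → Fin 3 → ℕ :=
  Sum.elim (periodicTimes 3 (xTime n k)) (periodicTimes 3 (yTime n))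

theorem strictMono_xTime (hk : k < n) : StrictMono (xTime n k) := by
  intro p q hpq
  unfold xTime
  split_ifs <;> omega

theorem strictMono_yTime (n : ℕ) : StrictMono (yTime n) := by
  intro p q hpq
  unfold yTime
  omega

theorem xTime_ne_yTime (p q : ℕ) : xTime n k p ≠ yTime n q := by
  unfold xTime yTime
  omega

theorem strictMono_crownTimes (hk : k < n) : ∀ v, StrictMono (crownTimes n k v)
  | .inl i => strictMono_periodicTimes (strictMono_xTime hk) i
  | .inr j => strictMono_periodicTimes (strictMono_yTime n) j

theorem crownTimes_injective2 (hk : k < n) : Function.Injective2 (crownTimes n k)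
  | .inl _, .inl _, _, _, h =>
    (periodicTimes_injective2 (strictMono_xTime hk).injective h).imp_left (congrArg Sum.inl)
  | .inr _, .inr _, _, _, h =>
    (periodicTimes_injective2 (strictMono_yTime n).injective h).imp_left (congrArg Sum.inr)
  | .inl _, .inr _, _, _, h => (xTime_ne_yTime _ _ h).elim
  | .inr _, .inl _, _, _, h => (xTime_ne_yTime _ _ h.symm).elim

theorem crownTimes_inl (i : Fin n) : crownTimes n k (.inl i) =
    ![2 * (i + k + 1), 2 * (n + i + k + 1), 2 * (3 * n + i)] := by
  funext t
  fin_cases t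
  · change xTime n k (n * 0 + i) = 2 * (i + k + 1)
    grind [xTime]
  · change xTime n k (n * 1 + i) = 2 * (n + i + k + 1)
    grind [xTime]
  · change xTime n k (n * 2 + i) = 2 * (3 * n + i)
    grind [xTime]

theorem crownTimes_inr (j : Fin n) : crownTimes n k (.inr j) =
    ![2 * (n + j) + 1, 2 * (2 * n + j) + 1, 2 * (3 * n + j) + 1] := by
  funext t
  fin_cases t
  · change yTime n (n * 0 + j) = 2 * (n + j) + 1
    grind [yTime]
  · change yTime n (n * 1 + j) = 2 * (2 * n + j) + 1
    grind [yTime]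
  · change yTime n (n * 2 + j) = 2 * (3 * n + j) + 1
    grind [yTime]

theorem interleaves_crownTimes_inl_inr (hk : k < n) (i j : Fin n) :
    Interleaves (crownTimes n k (.inl i)) (crownTimes n k (.inr j)) ↔
      (i : ℕ) ≤ j ∧ (j : ℕ) ≤ i + k := by
  rw [interleaves_fin_three, crownTimes_inl, crownTimes_inr]
  dsimp
  omega

theorem interleaves_crownTimes_inr_inl (hk : k < n) (i j : Fin n) :
    Interleaves (crownTimes n k (.inr j)) (crownTimes n k (.inl i)) ↔ (j : ℕ) + n ≤ i + k := by
  rw [interleaves_fin_three, crownTimes_inl, crownTimes_inr]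
  dsimp
  omega

theorem interleaves_crownTimes_inl_inr_or_iff_adj (hk : k < n) (i j : Fin n) :
    Interleaves (crownTimes n k (.inl i)) (crownTimes n k (.inr j)) ∨
        Interleaves (crownTimes n k (.inr j)) (crownTimes n k (.inl i)) ↔
      (genCrownGraph n k)ᶜ.Adj (.inl i) (.inr j) := by
  rw [interleaves_crownTimes_inl_inr hk, interleaves_crownTimes_inr_inl hk,
    compl_genCrownGraph_adj_inl_inr, exists_modEq_add_iff i.isLt j.isLt]

theorem interleaves_crownTimes_or_iff_adj (hk : k < n) : ∀ u v : Fin n ⊕ Fin n, u ≠ v →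
    (Interleaves (crownTimes n k u) (crownTimes n k v) ∨
        Interleaves (crownTimes n k v) (crownTimes n k u) ↔ (genCrownGraph n k)ᶜ.Adj u v)
  | .inl i, .inl j, hij => by
    have hij : i ≠ j := ne_of_apply_ne _ hij
    exact iff_of_true (interleaves_periodicTimes_or (strictMono_xTime hk) hij)
      (compl_genCrownGraph_adj_inl_inl.2 hij)
  | .inr i, .inr j, hij => by
    have hij : i ≠ j := ne_of_apply_ne _ hij
    exact iff_of_true (interleaves_periodicTimes_or (strictMono_yTime n) hij)
      (compl_genCrownGraph_adj_inr_inr.2 hij)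
  | .inl i, .inr j, _ => interleaves_crownTimes_inl_inr_or_iff_adj hk i j
  | .inr j, .inl i, _ => by
    rw [or_comm, SimpleGraph.adj_comm]
    exact interleaves_crownTimes_inl_inr_or_iff_adj hk i j

end Crown

/-- For all `n ≥ 1` and `0 ≤ k ≤ n-1`, the complement of the generalized crown graph
`S_{n-k}^k` can be represented by a 3-uniform word: a word in which every vertex occurs
exactly three times. -/
theorem complement_genCrownGraph_three_uniform :
    ∀ n k : ℕ, 1 ≤ n → k ≤ n - 1 → ∃ w : List (Fin n ⊕ Fin n),
      Represents (genCrownGraph n k)ᶜ w ∧ ∀ v : Fin n ⊕ Fin n, w.count v = 3 := by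
  intro n k hn hk
  have hkn : k < n := by omega
  exact ⟨wordOfTimes (crownTimes n k),
    represents_wordOfTimes (crownTimes_injective2 hkn) (strictMono_crownTimes hkn)
      (interleaves_crownTimes_or_iff_adj hkn),
    count_wordOfTimes (crownTimes n k)⟩
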